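/- Assume char F ≠ 2. Then: (i) P(x(d)) = 4d for every d ∈ Fˣ; (ii) a regular element (x,y) ∈ V lies in the G-orbit of x(d) if and only if P(x,y) = d·c² for some c ∈ Fˣ; consequently every regular element lies in the G-orbit of x(d) for some d ∈ Fˣ, and two regular elements (x,y), (x',y') lie in the same G-orbit if and only if P(x,y) = P(x',y')·c² for some c ∈ Fˣ. -/

import Mathlib

open Matrix

/-- `2 × 2` matrices over `F`. -/
abbrev M2 (F : Type*) := Matrix (Fin 2) (Fin 2) F

/-- The right action of `G = GL₂(F) × GL₂(F) × GL₂(F)` on `V = M₂(F) × M₂(F)`. -/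
noncomputable def act {F : Type*} [Field F] (v : M2 F × M2 F)
    (g : GL (Fin 2) F × GL (Fin 2) F × GL (Fin 2) F) : M2 F × M2 F :=
  ((((g.2.2 : M2 F) 0 0) • (((g.1⁻¹ : GL (Fin 2) F) : M2 F) * v.1 * (g.2.1 : M2 F)) +
      ((g.2.2 : M2 F) 1 0) • (((g.1⁻¹ : GL (Fin 2) F) : M2 F) * v.2 * (g.2.1 : M2 F))),
   (((g.2.2 : M2 F) 0 1) • (((g.1⁻¹ : GL (Fin 2) F) : M2 F) * v.1 * (g.2.1 : M2 F)) +
      ((g.2.2 : M2 F) 1 1) • (((g.1⁻¹ : GL (Fin 2) F) : M2 F) * v.2 * (g.2.1 : M2 F))))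

/-- `P₀(x,y) = x·y^ι − y·x^ι`, where `m^ι` is the adjugate. -/
def P0 {F : Type*} [Field F] (v : M2 F × M2 F) : M2 F :=
  v.1 * v.2.adjugate - v.2 * v.1.adjugate

/-- The fundamental relative invariant `P(x,y) = −det(P₀(x,y))`. -/
def Pinv {F : Type*} [Field F] (v : M2 F × M2 F) : F := - (P0 v).det

/-- The regular representative `x(d) = (I₂, δ_d)` with `δ_d = [[0,d],[1,0]]`. -/
def xd {F : Type*} [Field F] (d : F) : M2 F × M2 F := ((1 : M2 F), !![0, d; 1, 0])

/-!
The invariant `P(x, y) = tr(x y^ι)² - 4 det x det y` is the discriminant of the binary quadratic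
form `(s, t) ↦ det (s x + t y)`, and the group action multiplies it by nonzero squares. If it does
not vanish, the pencil spanned by `x` and `y` contains an invertible matrix, so `(x, y)` can be
moved to some `(1, y)`. Away from characteristic 2, replacing `y` by `2 y - tr y` makes it
traceless, with `-det` equal to `P(1, y)`; a nonscalar traceless matrix `z` has a cyclic vector and
is therefore conjugate to `δ_d` with `d = -det z`. Hence every regular `v` lies in the orbit of
`x(d)` for some `d` in the square class of `P(v)`. As `x(d)` and `x(d s²)` always share an orbit,
that square class determines the orbit.
-/

section TwoByTwo

variable {R : Type*} [CommRing R]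

theorem det_add_fin_two (x y : Matrix (Fin 2) (Fin 2) R) :
    (x + y).det = x.det + (x * y.adjugate).trace + y.det := by
  simp only [det_fin_two, trace_fin_two, adjugate_fin_two, mul_apply, Fin.sum_univ_two,
    Matrix.add_apply, of_apply, cons_val', cons_val_zero, cons_val_one, cons_val_fin_one]
  ring

theorem adjugate_add_fin_two (x y : Matrix (Fin 2) (Fin 2) R) :
    (x + y).adjugate = x.adjugate + y.adjugate := by
  simp [adjugate_fin_two, add_comm]

theorem trace_adjugate_fin_two (x : Matrix (Fin 2) (Fin 2) R) : x.adjugate.trace = x.trace := by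
  simp [adjugate_fin_two, trace_fin_two, add_comm]

theorem discr_scalar_fin_two (a : R) : (scalar (Fin 2) a).discr = 0 := by
  simp only [discr_fin_two, scalar_apply, trace_diagonal, det_diagonal, Fin.sum_univ_two,
    Fin.prod_univ_two]
  ring

theorem notMem_range_scalar_of_discr_ne_zero {x : Matrix (Fin 2) (Fin 2) R} (hx : x.discr ≠ 0) :
    x ∉ Set.range (scalar (Fin 2)) := by
  rintro ⟨a, rfl⟩
  exact hx (discr_scalar_fin_two a)

theorem trace_two_smul_sub_trace (x : Matrix (Fin 2) (Fin 2) R) :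
    ((2 : R) • x - x.trace • 1).trace = 0 := by
  simp [mul_comm]

theorem det_two_smul_sub_trace (x : Matrix (Fin 2) (Fin 2) R) :
    ((2 : R) • x - x.trace • 1).det = -x.discr := by
  simp only [discr_fin_two, det_fin_two, trace_fin_two, Matrix.sub_apply, Matrix.smul_apply,
    smul_eq_mul, one_apply_eq, one_apply_ne zero_ne_one, one_apply_ne one_ne_zero]
  ring

theorem exists_det_mulVec_ne_zero {x : Matrix (Fin 2) (Fin 2) R}
    (hx : x ∉ Set.range (scalar (Fin 2))) :
    ∃ v : Fin 2 → R, (of ![v, x *ᵥ v]).det ≠ 0 := by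
  by_contra! h
  have h10 : x 1 0 = 0 := by simpa [det_fin_two] using h ![1, 0]
  have h01 : x 0 1 = 0 := by simpa [det_fin_two] using h ![0, 1]
  have h11 : x 1 1 = x 0 0 := by simpa [det_fin_two, h10, h01, sub_eq_zero] using h ![1, 1]
  refine hx ⟨x 0 0, ?_⟩
  ext i j
  fin_cases i <;> fin_cases j <;> simp [h10, h01, h11]

theorem isConj_companion_of_notMem_range_scalar {F : Type*} [Field F] {x : Matrix (Fin 2) (Fin 2) F}
    (hx : x ∉ Set.range (scalar (Fin 2))) : IsConj x !![0, -x.det; 1, x.trace] := by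
  obtain ⟨v, hv⟩ := exists_det_mulVec_ne_zero hx
  let A : Matrix (Fin 2) (Fin 2) F := (of ![v, x *ᵥ v])ᵀ
  have hA : A.det ≠ 0 := by rwa [det_transpose]
  have hconj : A * !![0, -x.det; 1, x.trace] = x * A := by
    rw [det_fin_two, trace_fin_two]
    ext i j
    fin_cases i <;> fin_cases j <;>
      simp only [A, Fin.zero_eta, Fin.mk_one, mul_apply, mulVec_fin_two, transpose_apply,
        Fin.sum_univ_two, of_apply, cons_val', cons_val_zero, cons_val_one, cons_val_fin_one] <;>
      ring
  exact IsConj.symm ⟨GeneralLinearGroup.mkOfDetNeZero A hA, hconj⟩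

end TwoByTwo

section Orbits

variable {F : Type*} [Field F]

theorem act_one (v : M2 F × M2 F) : act v 1 = v := by
  simp [act]

theorem act_act (v : M2 F × M2 F) (g h : GL (Fin 2) F × GL (Fin 2) F × GL (Fin 2) F) :
    act (act v g) h = act v (g * h) := by
  obtain ⟨g₁, g₂, g₃⟩ := g
  obtain ⟨h₁, h₂, h₃⟩ := h
  ext1 <;>
  · simp only [act, Prod.mk_mul_mk, _root_.mul_inv_rev, Units.val_mul, Matrix.mul_add,
      Matrix.add_mul, Matrix.mul_smul, Matrix.smul_mul, smul_add, smul_smul, Matrix.mul_assoc,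
      Matrix.mul_apply (M := (g₃ : M2 F)), Fin.sum_univ_two, add_smul]
    simp only [mul_comm ((h₃ : M2 F) _ _)]
    abel

/-- Two elements of `V` are in the same orbit of the right action `act` of `GL₂(F)³`. -/
def SameOrbit (v w : M2 F × M2 F) : Prop :=
  ∃ g : GL (Fin 2) F × GL (Fin 2) F × GL (Fin 2) F, act v g = w

namespace SameOrbit

theorem symm {v w : M2 F × M2 F} : SameOrbit v w → SameOrbit w v := by
  rintro ⟨g, rfl⟩
  exact ⟨g⁻¹, by rw [act_act, mul_inv_cancel, act_one]⟩

theorem trans {u v w : M2 F × M2 F} : SameOrbit u v → SameOrbit v w → SameOrbit u w := by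
  rintro ⟨g, rfl⟩ ⟨h, rfl⟩
  exact ⟨g * h, (act_act u g h).symm⟩

end SameOrbit

theorem sameOrbit_mul_mul (A B : GL (Fin 2) F) (x y : M2 F) :
    SameOrbit (x, y) ((A⁻¹ : GL (Fin 2) F) * x * B, (A⁻¹ : GL (Fin 2) F) * y * B) :=
  ⟨(A, B, 1), by simp [act]⟩

theorem sameOrbit_linearCombination {a b c d : F} (h : a * d - b * c ≠ 0) (x y : M2 F) :
    SameOrbit (x, y) (a • x + c • y, b • x + d • y) :=
  ⟨(1, 1, GeneralLinearGroup.mkOfDetNeZero !![a, b; c, d] (by rwa [det_fin_two_of])), by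
    simp [act, GeneralLinearGroup.mkOfDetNeZero]⟩

theorem sameOrbit_one_inv_mul {x : M2 F} (hx : x.det ≠ 0) (y : M2 F) :
    SameOrbit (x, y) (1, x⁻¹ * y) := by
  simpa [GeneralLinearGroup.mkOfDetNeZero, hx] using
    sameOrbit_mul_mul (GeneralLinearGroup.mkOfDetNeZero x hx) 1 x y

theorem sameOrbit_one_of_isConj {y z : M2 F} : IsConj y z → SameOrbit (1, y) (1, z) := by
  rintro ⟨A, hA⟩
  have hz : (A : M2 F) * y * (A⁻¹ : GL (Fin 2) F) = z := (A.mul_inv_eq_iff_eq_mul).2 hA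
  simpa [← coe_units_inv, hz] using sameOrbit_mul_mul A⁻¹ A⁻¹ 1 y

theorem sameOrbit_xd_neg_det {y : M2 F} (hy : y ∉ Set.range (scalar (Fin 2)))
    (htr : y.trace = 0) : SameOrbit (1, y) (xd (-y.det)) := by
  simpa only [xd, htr] using sameOrbit_one_of_isConj (isConj_companion_of_notMem_range_scalar hy)

theorem sameOrbit_xd_mul_sq (d : F) {s : F} (hs : s ≠ 0) :
    SameOrbit (xd d) (xd (d * s ^ 2)) := by
  have hscale : SameOrbit (xd d) (1, s • !![0, d; 1, 0]) := by
    simpa [xd] using sameOrbit_linearCombination (a := 1) (b := 0) (c := 0) (d := s) (by simpa)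
      1 !![0, d; 1, 0]
  have hscalar : s • !![0, d; 1, 0] ∉ Set.range (scalar (Fin 2)) := by
    rintro ⟨a, ha⟩
    exact hs (by simpa using (congrFun₂ ha 1 0).symm)
  have hdet : -(s • !![0, d; 1, 0]).det = d * s ^ 2 := by
    rw [det_smul, det_fin_two_of, Fintype.card_fin]
    ring
  exact hdet ▸ hscale.trans (sameOrbit_xd_neg_det hscalar (by simp))

theorem P0_linearCombination (x y : M2 F) (a b c d : F) :
    P0 (a • x + c • y, b • x + d • y) = (a * d - b * c) • P0 (x, y) := by
  simp only [P0, adjugate_add_fin_two, adjugate_smul, Fintype.card_fin, Nat.add_one_sub_one,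
    pow_one, Matrix.add_mul, Matrix.mul_add, Matrix.smul_mul, Matrix.mul_smul]
  module

theorem P0_mul_mul (A B x y : M2 F) :
    P0 (A * x * B, A * y * B) = B.det • (A * P0 (x, y) * A.adjugate) := by
  have hmul (p q : M2 F) :
      A * p * B * (A * q * B).adjugate = B.det • (A * (p * q.adjugate) * A.adjugate) := by
    calc A * p * B * (A * q * B).adjugate
        = A * p * (B * B.adjugate) * (q.adjugate * A.adjugate) := by
          simp only [adjugate_mul_distrib, Matrix.mul_assoc]
      _ = B.det • (A * (p * q.adjugate) * A.adjugate) := by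
          simp [mul_adjugate, Matrix.mul_assoc]
  simp only [P0, hmul, Matrix.mul_sub, Matrix.sub_mul, smul_sub]

theorem Pinv_act (v : M2 F × M2 F) (g : GL (Fin 2) F × GL (Fin 2) F × GL (Fin 2) F) :
    Pinv (act v g) = Pinv v * ((g.1⁻¹.det * g.2.1.det * g.2.2.det : Fˣ) : F) ^ 2 := by
  simp only [Pinv, act, P0_linearCombination, P0_mul_mul, det_smul, det_mul, det_adjugate,
    Fintype.card_fin, Units.val_mul, GeneralLinearGroup.val_det_apply,
    det_fin_two (g.2.2 : M2 F)]
  ring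

theorem SameOrbit.exists_Pinv_eq {v w : M2 F × M2 F} :
    SameOrbit v w → ∃ c : Fˣ, Pinv w = Pinv v * (c : F) ^ 2 := by
  rintro ⟨g, rfl⟩
  exact ⟨_, Pinv_act v g⟩

theorem SameOrbit.Pinv_ne_zero {v w : M2 F × M2 F} (h : SameOrbit v w) (hv : Pinv v ≠ 0) :
    Pinv w ≠ 0 := by
  obtain ⟨c, hc⟩ := h.exists_Pinv_eq
  exact hc ▸ mul_ne_zero hv (pow_ne_zero 2 c.ne_zero)

theorem Pinv_eq_trace_sq_sub (x y : M2 F) :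
    Pinv (x, y) = (x * y.adjugate).trace ^ 2 - 4 * x.det * y.det := by
  simp only [Pinv, P0, adjugate_fin_two, det_fin_two, trace_fin_two, Matrix.sub_apply, mul_apply,
    Fin.sum_univ_two, of_apply, cons_val', cons_val_zero, cons_val_one, cons_val_fin_one]
  ring

theorem Pinv_one_left (y : M2 F) : Pinv (1, y) = y.discr := by
  simp [Pinv_eq_trace_sq_sub, trace_adjugate_fin_two, discr_fin_two]

theorem Pinv_xd (d : F) : Pinv (xd d) = 4 * d := by
  simp [xd, Pinv_one_left, discr_fin_two]

theorem exists_sameOrbit_det_ne_zero {v : M2 F × M2 F} (hv : Pinv v ≠ 0) :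
    ∃ x y : M2 F, x.det ≠ 0 ∧ SameOrbit v (x, y) := by
  obtain ⟨x, y⟩ := v
  by_cases hx : x.det = 0
  · by_cases hy : y.det = 0
    · have hxy : (x + y).det ≠ 0 := by
        simpa [Pinv_eq_trace_sq_sub, det_add_fin_two, hx, hy] using hv
      refine ⟨x + y, y, hxy, ?_⟩
      simpa using sameOrbit_linearCombination (a := 1) (b := 0) (c := 1) (d := 1) (by simp) x y
    · refine ⟨y, x, hy, ?_⟩
      simpa using sameOrbit_linearCombination (a := 0) (b := 1) (c := 1) (d := 0) (by simp) x y
  · exact ⟨x, y, hx, by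
      simpa using sameOrbit_linearCombination (a := 1) (b := 0) (c := 0) (d := 1) (by simp) x y⟩

theorem exists_sameOrbit_one_left {v : M2 F × M2 F} (hv : Pinv v ≠ 0) :
    ∃ y : M2 F, SameOrbit v (1, y) := by
  obtain ⟨x, y, hx, hxy⟩ := exists_sameOrbit_det_ne_zero hv
  exact ⟨x⁻¹ * y, hxy.trans (sameOrbit_one_inv_mul hx y)⟩

theorem sameOrbit_xd_discr (h2 : (2 : F) ≠ 0) {y : M2 F} (hy : y.discr ≠ 0) :
    SameOrbit (1, y) (xd y.discr) := by
  let z : M2 F := (2 : F) • y - y.trace • 1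
  have hz_det : z.det = -y.discr := det_two_smul_sub_trace y
  have hz_trace : z.trace = 0 := trace_two_smul_sub_trace y
  have hz_discr : z.discr = 2 ^ 2 * y.discr := by
    rw [discr_fin_two, hz_trace, hz_det]
    ring
  have hz_scalar : z ∉ Set.range (scalar (Fin 2)) :=
    notMem_range_scalar_of_discr_ne_zero (hz_discr ▸ mul_ne_zero (pow_ne_zero 2 h2) hy)
  have hz : SameOrbit (1, y) (1, z) := by
    simpa [z, neg_add_eq_sub] using sameOrbit_linearCombination (a := 1) (b := -y.trace) (c := 0)
      (d := 2) (by simpa) 1 y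
  simpa [hz_det] using hz.trans (sameOrbit_xd_neg_det hz_scalar hz_trace)

theorem sameOrbit_xd_Pinv (h2 : (2 : F) ≠ 0) {v : M2 F × M2 F} (hv : Pinv v ≠ 0) :
    SameOrbit v (xd (Pinv v)) := by
  obtain ⟨y, hy⟩ := exists_sameOrbit_one_left hv
  obtain ⟨c, hc⟩ := hy.symm.exists_Pinv_eq
  have hdiscr : y.discr ≠ 0 := Pinv_one_left y ▸ hy.Pinv_ne_zero hv
  rw [hc, Pinv_one_left]
  exact (hy.trans (sameOrbit_xd_discr h2 hdiscr)).trans (sameOrbit_xd_mul_sq _ c.ne_zero)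

theorem sameOrbit_xd_iff (h2 : (2 : F) ≠ 0) (d : F) {v : M2 F × M2 F} (hv : Pinv v ≠ 0) :
    SameOrbit (xd d) v ↔ ∃ c : Fˣ, Pinv v = d * (c : F) ^ 2 := by
  constructor
  · intro h
    obtain ⟨c, hc⟩ := h.exists_Pinv_eq
    refine ⟨Units.mk0 2 h2 * c, ?_⟩
    rw [hc, Pinv_xd, Units.val_mul, Units.val_mk0]
    ring
  · rintro ⟨c, hc⟩
    exact (hc ▸ sameOrbit_xd_mul_sq d c.ne_zero).trans (sameOrbit_xd_Pinv h2 hv).symm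

theorem sameOrbit_iff (h2 : (2 : F) ≠ 0) {v w : M2 F × M2 F} (hv : Pinv v ≠ 0)
    (hw : Pinv w ≠ 0) : SameOrbit v w ↔ ∃ c : Fˣ, Pinv v = Pinv w * (c : F) ^ 2 := by
  have hw_xd : SameOrbit w (xd (Pinv w)) := sameOrbit_xd_Pinv h2 hw
  rw [← sameOrbit_xd_iff h2 (Pinv w) hv]
  exact ⟨fun h => (h.trans hw_xd).symm, fun h => (hw_xd.trans h).symm⟩

end Orbits

/-- in characteristic ≠ 2, (i) `P(x(d)) = 4d`; (ii) a regular element lies in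
the `G`-orbit of `x(d)` iff `P = d·c²` for some `c ∈ Fˣ`; consequently every regular
element lies in some orbit of an `x(d)`, and two regular elements lie in the same orbit
iff their `P`-values differ by a nonzero square. -/
theorem stmt5 {F : Type*} [Field F] (h2 : (2 : F) ≠ 0) :
    (∀ d : Fˣ, Pinv (xd (d : F)) = 4 * (d : F)) ∧
    (∀ (d : Fˣ) (v : M2 F × M2 F), Pinv v ≠ 0 →
      ((∃ g : GL (Fin 2) F × GL (Fin 2) F × GL (Fin 2) F, act (xd (d : F)) g = v) ↔
        ∃ c : Fˣ, Pinv v = (d : F) * (c : F) ^ 2)) ∧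
    (∀ v : M2 F × M2 F, Pinv v ≠ 0 →
      ∃ (d : Fˣ) (g : GL (Fin 2) F × GL (Fin 2) F × GL (Fin 2) F), act (xd (d : F)) g = v) ∧
    (∀ v w : M2 F × M2 F, Pinv v ≠ 0 → Pinv w ≠ 0 →
      ((∃ g : GL (Fin 2) F × GL (Fin 2) F × GL (Fin 2) F, act v g = w) ↔
        ∃ c : Fˣ, Pinv v = Pinv w * (c : F) ^ 2)) := by
  exact ⟨fun d => Pinv_xd (d : F), fun d _ hv => sameOrbit_xd_iff h2 (d : F) hv,
    fun v hv => ⟨Units.mk0 (Pinv v) hv, (sameOrbit_xd_Pinv h2 hv).symm⟩,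
    fun _ _ hv hw => sameOrbit_iff h2 hv hw⟩
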